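/- arXiv:1804.02268 — 2 statements merged into one kernel-verified Lean document; each statement's English description precedes it below -/
import Mathlib

section
/- (Roberts' theorem on parallel domains.) Suppose |A| ≥ 3 and 𝒰 = ∏_{i=1}^n U_i is an unrestricted parallel utility domain. Then for every social choice mechanism (x,t) on 𝒰 that is DSIC, deterministic, onto, IR and satisfies no subsidy, there exist nonnegative weights k_1,…,k_n, not all zero, and real constants (C_a)_{a∈A}, such that for every u ∈ 𝒰, x(u) ∈ argmax_{a∈A} ( Σ_{i=1}^n k_i p_{i,a} + C_a ). -/
/-!
Common framework: agents indexed by `I`, alternatives `A` (finite, nonempty).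
A type of an agent is a family `u : A → ℝ → ℝ`, where `u a z` is the utility
when alternative `a` is selected and the agent pays `z`.
-/

noncomputable section

namespace NQLSC

/-- A type (utility family) of an agent. -/
abbrev Util (A : Type*) := A → ℝ → ℝ

variable {A I : Type*}

/-- (S1): each `u a` is continuous and strictly decreasing in the payment. -/
def S1 (u : Util A) : Prop := ∀ a, Continuous (u a) ∧ StrictAnti (u a)

/-- `min_{a'∈A} u_{a'}(0)`, the value of the worst alternative at zero payment. -/
def minVal [Fintype A] [Nonempty A] (u : Util A) : ℝ :=
  Finset.univ.inf' Finset.univ_nonempty (fun a => u a 0)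

/-- (S2): as the payment tends to `+∞`, the utility of every alternative drops
(strictly) below `min_{a'} u_{a'}(0)`; for strictly decreasing utilities this is
equivalent to the utility being below that value at some payment. -/
def S2 [Fintype A] [Nonempty A] (u : Util A) : Prop :=
  ∀ a, ∃ z : ℝ, u a z < minVal u

/-- The willingness to pay `p_a = u_a⁻¹(min_{a'} u_{a'}(0))` (under (S1),(S2) this
`sInf` is the unique payment at which `u a` attains `minVal u`). -/
def wtp [Fintype A] [Nonempty A] (u : Util A) (a : A) : ℝ :=
  sInf {z : ℝ | u a z ≤ minVal u}

/-- A parallel type: (S1), (S2), and for all `a, b` with `v_a ≥ v_b` and all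
`z ∈ [0, p_b]`, `u_a (z + (p_a − p_b)) = u_b z`. -/
def IsParallel [Fintype A] [Nonempty A] (u : Util A) : Prop :=
  S1 u ∧ S2 u ∧ ∀ a b : A, u b 0 ≤ u a 0 → ∀ z : ℝ, 0 ≤ z → z ≤ wtp u b →
    u a (z + (wtp u a - wtp u b)) = u b z

/-- Unrestricted willingness to pay: every nonnegative vector with a zero entry is
the willingness-to-pay vector of some type in the domain. -/
def UnrestrictedWTP [Fintype A] [Nonempty A] (U : Set (Util A)) : Prop :=
  ∀ lam : A → ℝ, (∀ a, 0 ≤ lam a) → (∃ a, lam a = 0) →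
    ∃ u ∈ U, ∀ a, wtp u a = lam a

/-- Dominant-strategy incentive compatibility of a (deterministic) mechanism `(x,t)`
on the domain `𝒰 = ∏ i, U i`. -/
def DSIC [DecidableEq I] (U : I → Set (Util A)) (x : (I → Util A) → A)
    (t : (I → Util A) → I → ℝ) : Prop :=
  ∀ uh : I → Util A, (∀ j, uh j ∈ U j) → ∀ i, ∀ ui ∈ U i,
    ui (x uh) (t uh i) ≤
      ui (x (Function.update uh i ui)) (t (Function.update uh i ui) i)

/-- Individual rationality. -/
def IR [Fintype A] [Nonempty A] [DecidableEq I] (U : I → Set (Util A))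
    (x : (I → Util A) → A) (t : (I → Util A) → I → ℝ) : Prop :=
  ∀ uh : I → Util A, (∀ j, uh j ∈ U j) → ∀ i, ∀ ui ∈ U i,
    minVal ui ≤ ui (x (Function.update uh i ui)) (t (Function.update uh i ui) i)

/-- No subsidy: the mechanism never makes positive transfers to an agent. -/
def NoSubsidy (U : I → Set (Util A)) (t : (I → Util A) → I → ℝ) : Prop :=
  ∀ u : I → Util A, (∀ j, u j ∈ U j) → ∀ i, 0 ≤ t u i

/-- Ontoness of the choice rule on the given domain. -/
def OntoMech (U : I → Set (Util A)) (x : (I → Util A) → A) : Prop :=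
  ∀ a, ∃ u : I → Util A, (∀ j, u j ∈ U j) ∧ x u = a

/-!
For nonnegative payments, a parallel agent ranks individually rational outcomes by the quasi-linear
surplus `p_a - t`. So the mechanism is weakly monotone in willingness to pay, and the choices it
makes at each profile of willingness-to-pay differences satisfy positive association of differences
(PAD).

For such a correspondence, let `P(a,b)` be the set of vectors strictly above some difference
`v_a - v_b` at which `a` is chosen, and let `γ(a,b)` be the infimum of the `s` with
`(s,…,s) ∈ P(a,b)`. PAD gives `γ(b,a) = -γ(a,b)` and, for distinct alternatives,
`P(a,b) + P(b,c) ⊆ P(a,c)`; so `γ(a,b) + γ(b,c) = γ(a,c)`. With a third alternative, all the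
translates `P(a,b) - γ(a,b)·(1,…,1)` become one and the same open upward closed additive semigroup
avoiding `0`. A hyperplane separating it from `0` provides the weights `k_i`, and
`C_b = (∑ k_i) γ(o,b)`, for any fixed alternative `o`, the constants.
-/

section Separation

open Filter Topology

lemma nsmul_mem_of_pos {M S : Type*} [AddMonoid M] [SetLike S M] [AddMemClass S M] {L : S} {x : M}
    (hx : x ∈ L) {n : ℕ} (hn : 0 < n) : n • x ∈ L := by
  induction n, hn using Nat.le_induction with
  | base => simpa using hx
  | succ n _ ih =>
    rw [succ_nsmul]
    exact add_mem ih hx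

variable {E : Type*} [AddCommGroup E] [Module ℝ E]

lemma eventually_smul_mem_atTop [TopologicalSpace E] [ContinuousSMul ℝ E] {L : AddSubsemigroup E}
    (hL : IsOpen (L : Set E)) {x : E} (hx : x ∈ L) : ∀ᶠ r : ℝ in atTop, r • x ∈ L := by
  have hlim : Tendsto (fun r : ℝ => ((⌊r⌋₊ : ℝ) / r)⁻¹ • x) atTop (𝓝 x) := by
    simpa using ((tendsto_nat_floor_div_atTop (R := ℝ)).inv₀ one_ne_zero).smul_const x
  filter_upwards [hlim.eventually_mem (hL.mem_nhds hx), eventually_ge_atTop 1] with r hr h1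
  have hfloor : 0 < ⌊r⌋₊ := Nat.floor_pos.2 h1
  have hsmul : r • x = ⌊r⌋₊ • ((⌊r⌋₊ : ℝ) / r)⁻¹ • x := by
    rw [← Nat.cast_smul_eq_nsmul ℝ, smul_smul, inv_div, mul_div_cancel₀]
    exact_mod_cast hfloor.ne'
  rw [hsmul]
  exact nsmul_mem_of_pos hr hfloor

lemma exists_strongDual_pos_of_isOpen [TopologicalSpace E] [IsTopologicalAddGroup E]
    [ContinuousSMul ℝ E] {L : AddSubsemigroup E} (hL : IsOpen (L : Set E)) (h0 : 0 ∉ L) :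
    ∃ f : StrongDual ℝ E, ∀ x ∈ L, 0 < f x := by
  set T : Set E := {x | ∃ c : ℝ, 0 < c ∧ c • x ∈ L}
  have hT_eventually {x : E} (hx : x ∈ T) : ∀ᶠ r : ℝ in atTop, r • x ∈ L := by
    obtain ⟨c, hc, hcx⟩ := hx
    filter_upwards [(tendsto_id.atTop_div_const hc).eventually
      (eventually_smul_mem_atTop hL hcx)] with r hr
    simpa [smul_smul, hc.ne'] using hr
  have hT_smul {x : E} (hx : x ∈ T) {a : ℝ} (ha : 0 < a) : a • x ∈ T := by
    obtain ⟨c, hc, hcx⟩ := hx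
    exact ⟨c / a, div_pos hc ha, by rwa [smul_smul, div_mul_cancel₀ _ ha.ne']⟩
  have hT_add {x y : E} (hx : x ∈ T) (hy : y ∈ T) : x + y ∈ T := by
    obtain ⟨r, ⟨hrx, hry⟩, hr⟩ :=
      (((hT_eventually hx).and (hT_eventually hy)).and (eventually_gt_atTop 0)).exists
    exact ⟨r, hr, by simpa using add_mem hrx hry⟩
  have hT_convex : Convex ℝ T := convex_iff_forall_pos.2 fun x hx y hy a b ha hb _ =>
    hT_add (hT_smul hx ha) (hT_smul hy hb)
  have hT_open : IsOpen T := by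
    have hT : T = ⋃ c : ℝ, ⋃ _ : 0 < c, (c • ·) ⁻¹' (L : Set E) := by
      ext x
      simp [T]
    rw [hT]
    exact isOpen_biUnion fun c _ => hL.preimage (continuous_const_smul c)
  have hT_zero : (0 : E) ∉ T := by simpa [T] using fun _ _ => h0
  obtain ⟨f, hf⟩ := geometric_hahn_banach_point_open hT_convex hT_open hT_zero
  exact ⟨f, fun x hx => by simpa using hf x ⟨1, one_pos, by simpa using hx⟩⟩

lemma nonneg_of_pos_on_isUpperSet [PartialOrder E] [IsOrderedAddMonoid E] [PosSMulMono ℝ E]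
    {L : Set E} (hup : IsUpperSet L) (hne : L.Nonempty) {f : E →ₗ[ℝ] ℝ} (hf : ∀ x ∈ L, 0 < f x)
    {y : E} (hy : 0 ≤ y) : 0 ≤ f y := by
  by_contra! hneg
  obtain ⟨x, hx⟩ := hne
  have hc : 0 ≤ f x / -f y := div_nonneg (hf x hx).le (neg_nonneg.2 hneg.le)
  have hpos := hf _ (hup (le_add_of_nonneg_right (smul_nonneg hc hy)) hx)
  rw [map_add, map_smul, smul_eq_mul, div_neg, neg_mul, div_mul_cancel₀ _ hneg.ne,
    add_neg_cancel] at hpos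
  exact hpos.false

lemma exists_weights_pos_of_isOpen [Fintype I] {L : AddSubsemigroup (I → ℝ)}
    (hL : IsOpen (L : Set (I → ℝ))) (hup : IsUpperSet (L : Set (I → ℝ)))
    (hne : (L : Set (I → ℝ)).Nonempty) (h0 : 0 ∉ L) :
    ∃ k : I → ℝ, 0 ≤ k ∧ ∀ α ∈ L, 0 < k ⬝ᵥ α := by
  classical
  obtain ⟨f, hf⟩ := exists_strongDual_pos_of_isOpen hL h0
  obtain ⟨k, hk⟩ := (dotProductEquiv ℝ I).surjective f.toLinearMap
  have hfk (α : I → ℝ) : k ⬝ᵥ α = f α := DFunLike.congr_fun hk α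
  refine ⟨k, fun i => ?_, fun α hα => hfk α ▸ hf α hα⟩
  rw [← dotProduct_single_one k i, hfk]
  exact nonneg_of_pos_on_isUpperSet (f := f.toLinearMap) hup hne hf
    (Pi.single_nonneg.2 zero_le_one)

lemma exists_pos_sub_const_mem {s : Set (I → ℝ)} (hs : IsOpen s) {α : I → ℝ} (hα : α ∈ s) :
    ∃ ε > 0, α - Function.const I ε ∈ s := by
  have hcont : Continuous fun ε : ℝ => α - Function.const I ε :=
    continuous_pi fun _ => continuous_const.sub continuous_id
  exact (hcont.continuousAt.eventually_mem (hs.mem_nhds (by simpa using hα))).exists_gt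

end Separation

/-- A choice correspondence on `(ℝ^A)^I` with nonempty values that selects every alternative
somewhere and has *positive association of differences*: when the chosen alternative is raised
strictly relative to all others for every agent, it becomes the only choice. -/
structure IsPADCorrespondence (F : (I → A → ℝ) → Set A) : Prop where
  nonempty : ∀ v, (F v).Nonempty
  onto : ∀ a, ∃ v, a ∈ F v
  pad : ∀ {v v' a c}, a ∈ F v → (∀ i, ∀ b ≠ a, v i a - v i b < v' i a - v' i b) → c ∈ F v' → c = a

/-- The set `P(a,b)` of vectors strictly above some difference `v_a - v_b` at which `a` is
chosen; the strict inequality makes it open. -/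
def thresholdSet (F : (I → A → ℝ) → Set A) (a b : A) : Set (I → ℝ) :=
  {α | ∃ v, a ∈ F v ∧ ∀ i, v i a - v i b < α i}

/-- The critical value `γ(a,b)`: the infimum of the `s` for which the constant vector `s` lies in
`P(a,b)`, a set of `s` that PAD makes nonempty and bounded below when `a ≠ b`. -/
def threshold (F : (I → A → ℝ) → Set A) (a b : A) : ℝ :=
  sInf {s : ℝ | Function.const I s ∈ thresholdSet F a b}

/-- The translate `P(a,b) - γ(a,b)·(1,…,1)`, which turns out not to depend on `a` and `b`. -/
def excessSet (F : (I → A → ℝ) → Set A) (a b : A) : Set (I → ℝ) :=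
  {α | α + Function.const I (threshold F a b) ∈ thresholdSet F a b}

lemma isUpperSet_thresholdSet (F : (I → A → ℝ) → Set A) (a b : A) :
    IsUpperSet (thresholdSet F a b) := by
  rintro α β hle ⟨v, hv, hlt⟩
  exact ⟨v, hv, fun i => (hlt i).trans_le (hle i)⟩

lemma isOpen_thresholdSet [Finite I] (F : (I → A → ℝ) → Set A) (a b : A) :
    IsOpen (thresholdSet F a b) := by
  have hunion : thresholdSet F a b =
      ⋃ v, ⋃ _ : a ∈ F v, ⋂ i, {α : I → ℝ | v i a - v i b < α i} := by
    ext α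
    simp [thresholdSet]
  rw [hunion]
  exact isOpen_biUnion fun v _ => isOpen_iInter_of_finite fun i =>
    isOpen_lt continuous_const (continuous_apply i)

lemma isUpperSet_excessSet (F : (I → A → ℝ) → Set A) (a b : A) : IsUpperSet (excessSet F a b) :=
  fun _ _ hle hα => isUpperSet_thresholdSet F a b (add_le_add_left hle _) hα

lemma isOpen_excessSet [Finite I] (F : (I → A → ℝ) → Set A) (a b : A) :
    IsOpen (excessSet F a b) :=
  (isOpen_thresholdSet F a b).preimage (continuous_add_const _)

lemma mul_threshold_le_dotProduct_sub [Fintype I] {F : (I → A → ℝ) → Set A} {a b : A}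
    {k : I → ℝ} (hk : 0 < k ⬝ᵥ 1) (hpos : ∀ α ∈ excessSet F a b, 0 < k ⬝ᵥ α)
    {v : I → A → ℝ} (hv : a ∈ F v) :
    (k ⬝ᵥ 1) * threshold F a b ≤ k ⬝ᵥ fun i => v i a - v i b := by
  refine le_of_forall_pos_lt_add fun δ hδ => ?_
  set ε := δ / (k ⬝ᵥ 1)
  have hmem : (fun i => v i a - v i b) + (ε - threshold F a b) • (1 : I → ℝ) ∈
      excessSet F a b := by
    refine ⟨v, hv, fun i => ?_⟩
    have hε : 0 < ε := div_pos hδ hk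
    simp [add_assoc, hε]
  have hlt := hpos _ hmem
  have hεδ : ε * (k ⬝ᵥ 1) = δ := div_mul_cancel₀ _ hk.ne'
  rw [dotProduct_add, dotProduct_smul, smul_eq_mul, sub_mul, hεδ] at hlt
  linarith

namespace IsPADCorrespondence

variable {F : (I → A → ℝ) → Set A} {a b c d : A} {α β : I → ℝ}

lemma notMem_of_mem_thresholdSet (hF : IsPADCorrespondence F) (hab : a ≠ b)
    (hα : α ∈ thresholdSet F a b) {v : I → A → ℝ} (hv : ∀ i, α i ≤ v i a - v i b) : b ∉ F v := by
  classical
  intro hvb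
  obtain ⟨w, hwa, hlt⟩ := hα
  choose m hwm hmα using fun i => exists_between (hlt i)
  -- With `a` placed at `m` and `b` at `0`, PAD forces the choice `a` from `w` and `b` from `v`.
  set u : I → A → ℝ := fun i c => if c = a then m i else if c = b then 0 else
    min (w i c - w i a + m i) (v i c - v i b) - 1 with hu
  have hua (i : I) : u i a = m i := by simp [hu]
  have hub (i : I) : u i b = 0 := by simp [hu, hab.symm]
  have huw (i : I) (c : A) (hc : c ≠ a) : u i c < w i c - w i a + m i := by
    rcases eq_or_ne c b with rfl | hcb
    · linarith [hub i, hwm i]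
    · simp only [hu, if_neg hc, if_neg hcb]
      exact (sub_one_lt _).trans_le (min_le_left _ _)
  have huv (i : I) (c : A) (hc : c ≠ b) : u i c < v i c - v i b := by
    rcases eq_or_ne c a with rfl | hca
    · linarith [hua i, hmα i, hv i]
    · simp only [hu, if_neg hc, if_neg hca]
      exact (sub_one_lt _).trans_le (min_le_right _ _)
  obtain ⟨e, he⟩ := hF.nonempty u
  have hea : e = a := hF.pad hwa (fun i c hc => by linarith [hua i, huw i c hc]) he
  have heb : e = b := hF.pad hvb (fun i c hc => by linarith [hub i, huv i c hc]) he
  exact hab (hea.symm.trans heb)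

lemma exists_eqOn_inter_nonempty (hF : IsPADCorrespondence F) {s : Set A} (hs : s.Nonempty)
    (g : I → A → ℝ) : ∃ v, (∀ i, Set.EqOn (v i) (g i) s) ∧ (F v ∩ s).Nonempty := by
  classical
  obtain ⟨a, ha⟩ := hs
  obtain ⟨w, hw⟩ := hF.onto a
  -- Outside `s`, alternatives are pushed below `a` further than at `w`, where `a` is chosen.
  set v : I → A → ℝ := fun i => s.piecewise (g i) fun c => g i a - (w i a - w i c + 1)
  have hvs (i : I) : Set.EqOn (v i) (g i) s := s.piecewise_eqOn _ _
  obtain ⟨b, hb⟩ := hF.nonempty v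
  refine ⟨v, hvs, b, hb, ?_⟩
  by_contra hbs
  refine hF.notMem_of_mem_thresholdSet (ne_of_mem_of_not_mem ha hbs)
    (α := fun i => w i a - w i b + 1) ⟨w, hw, fun i => lt_add_one _⟩ (fun i => ?_) hb
  simp [hvs i ha, v, hbs]

lemma nonempty_thresholdSet (hF : IsPADCorrespondence F) (a b : A) :
    (thresholdSet F a b).Nonempty := by
  obtain ⟨v, hv⟩ := hF.onto a
  exact ⟨fun i => v i a - v i b + 1, v, hv, fun i => lt_add_one _⟩

lemma exists_add_pos (hF : IsPADCorrespondence F) (hab : a ≠ b) (hα : α ∈ thresholdSet F a b)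
    (hβ : β ∈ thresholdSet F b a) : ∃ i, 0 < α i + β i := by
  by_contra! h
  obtain ⟨v, hv, hlt⟩ := hβ
  exact hF.notMem_of_mem_thresholdSet hab hα (fun i => by linarith [h i, hlt i]) hv

lemma nonempty_agents (hF : IsPADCorrespondence F) (hab : a ≠ b) : Nonempty I := by
  obtain ⟨α, hα⟩ := hF.nonempty_thresholdSet a b
  obtain ⟨β, hβ⟩ := hF.nonempty_thresholdSet b a
  exact (hF.exists_add_pos hab hα hβ).nonempty

lemma mem_thresholdSet_or_mem_thresholdSet (hF : IsPADCorrespondence F) (hab : a ≠ b)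
    (h : ∀ i, 0 < α i + β i) : α ∈ thresholdSet F a b ∨ β ∈ thresholdSet F b a := by
  classical
  obtain ⟨v, hv, e, hFe, he⟩ := hF.exists_eqOn_inter_nonempty (Set.insert_nonempty a {b})
    fun i c => if c = a then (α i - β i) / 2 else 0
  have hva (i : I) : v i a = (α i - β i) / 2 := by simp [hv i (show a ∈ {a, b} by simp)]
  have hvb (i : I) : v i b = 0 := by simp [hv i (show b ∈ {a, b} by simp), hab.symm]
  rcases he with rfl | rfl
  · exact .inl ⟨v, hFe, fun i => by linarith [h i, hva i, hvb i]⟩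
  · exact .inr ⟨v, hFe, fun i => by linarith [h i, hva i, hvb i]⟩

lemma threshold_self [Nonempty I] (hF : IsPADCorrespondence F) (a : A) : threshold F a a = 0 := by
  have hIoi : {s : ℝ | Function.const I s ∈ thresholdSet F a a} = Set.Ioi 0 := by
    ext s
    simp [thresholdSet, hF.onto a]
  rw [threshold, hIoi, csInf_Ioi]

section FiniteAgents

variable [Finite I]

lemma add_mem_thresholdSet (hF : IsPADCorrespondence F) (hab : a ≠ b) (hbc : b ≠ c) (hac : a ≠ c)
    (hα : α ∈ thresholdSet F a b) (hβ : β ∈ thresholdSet F b c) :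
    α + β ∈ thresholdSet F a c := by
  classical
  obtain ⟨ε, hε, hα'⟩ := exists_pos_sub_const_mem (isOpen_thresholdSet F a b) hα
  obtain ⟨v, hv, e, hFe, he⟩ := hF.exists_eqOn_inter_nonempty (Set.insert_nonempty a {b, c})
    fun i d => if d = a then α i - ε + β i else if d = b then β i else 0
  have hva (i : I) : v i a = α i - ε + β i := by simp [hv i (show a ∈ {a, b, c} by simp)]
  have hvb (i : I) : v i b = β i := by simp [hv i (show b ∈ {a, b, c} by simp), hab.symm]
  have hvc (i : I) : v i c = 0 := by
    simp [hv i (show c ∈ {a, b, c} by simp), hac.symm, hbc.symm]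
  rcases he with rfl | rfl | rfl
  · exact ⟨v, hFe, fun i => by rw [hva, hvc, Pi.add_apply]; linarith⟩
  · exact absurd hFe (hF.notMem_of_mem_thresholdSet hab hα' fun i => by simp [hva, hvb])
  · exact absurd hFe (hF.notMem_of_mem_thresholdSet hbc hβ fun i => by simp [hvb, hvc])

lemma exists_const_mem_thresholdSet (hF : IsPADCorrespondence F) (a b : A) :
    ∃ s : ℝ, Function.const I s ∈ thresholdSet F a b := by
  obtain ⟨α, hα⟩ := hF.nonempty_thresholdSet a b
  obtain ⟨s, hs⟩ := (Set.finite_range α).bddAbove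
  exact ⟨s, isUpperSet_thresholdSet F a b (fun i => hs ⟨i, rfl⟩) hα⟩

lemma const_mem_thresholdSet_iff (hF : IsPADCorrespondence F) (hab : a ≠ b) {s : ℝ} :
    Function.const I s ∈ thresholdSet F a b ↔ threshold F a b < s := by
  have hbdd : BddBelow {r : ℝ | Function.const I r ∈ thresholdSet F a b} := by
    obtain ⟨m, hm⟩ := hF.exists_const_mem_thresholdSet b a
    refine ⟨-m, fun r hr => ?_⟩
    obtain ⟨i, hi⟩ := hF.exists_add_pos hab hr hm
    exact (neg_lt_iff_pos_add.2 hi).le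
  constructor
  · intro hs
    obtain ⟨ε, hε, hmem⟩ := exists_pos_sub_const_mem (isOpen_thresholdSet F a b) hs
    exact (csInf_le hbdd hmem).trans_lt (sub_lt_self s hε)
  · intro hs
    obtain ⟨r, hr, hrs⟩ := exists_lt_of_csInf_lt (hF.exists_const_mem_thresholdSet a b) hs
    exact isUpperSet_thresholdSet F a b (fun _ => hrs.le) hr

lemma threshold_swap (hF : IsPADCorrespondence F) (hab : a ≠ b) :
    threshold F b a = -threshold F a b := by
  apply le_antisymm
  · by_contra! hlt
    obtain ⟨r, hr, hrt⟩ := exists_between hlt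
    obtain ⟨s, hrs, hs⟩ := exists_between hrt
    rcases hF.mem_thresholdSet_or_mem_thresholdSet hab (α := Function.const I (-r))
      (β := Function.const I s) fun _ => by simpa using hrs with hmem | hmem
    · exact (neg_lt.1 hr).not_gt ((hF.const_mem_thresholdSet_iff hab).1 hmem)
    · exact hs.not_gt ((hF.const_mem_thresholdSet_iff hab.symm).1 hmem)
  · by_contra! hlt
    obtain ⟨s, hts, hs⟩ := exists_between hlt
    obtain ⟨i, hi⟩ := hF.exists_add_pos hab
      ((hF.const_mem_thresholdSet_iff hab).2 (lt_neg.1 hs))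
      ((hF.const_mem_thresholdSet_iff hab.symm).2 hts)
    simp at hi

lemma threshold_le_add (hF : IsPADCorrespondence F) (hab : a ≠ b) (hbc : b ≠ c) (hac : a ≠ c) :
    threshold F a c ≤ threshold F a b + threshold F b c := by
  refine le_of_forall_pos_le_add fun ε hε => ?_
  have hmem := hF.add_mem_thresholdSet hab hbc hac
    ((hF.const_mem_thresholdSet_iff hab).2 (lt_add_of_pos_right _ (half_pos hε)))
    ((hF.const_mem_thresholdSet_iff hbc).2 (lt_add_of_pos_right _ (half_pos hε)))
  have hlt : threshold F a c < (threshold F a b + ε / 2) + (threshold F b c + ε / 2) :=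
    (hF.const_mem_thresholdSet_iff hac).1 hmem
  linarith

lemma threshold_add [Nonempty I] (hF : IsPADCorrespondence F) (a b c : A) :
    threshold F a b + threshold F b c = threshold F a c := by
  rcases eq_or_ne a b with rfl | hab
  · rw [hF.threshold_self, zero_add]
  rcases eq_or_ne b c with rfl | hbc
  · rw [hF.threshold_self, add_zero]
  rcases eq_or_ne a c with rfl | hac
  · rw [hF.threshold_self, hF.threshold_swap hab, add_neg_cancel]
  have hle := hF.threshold_le_add hab hbc hac
  have hge := hF.threshold_le_add hac hbc.symm hab
  rw [hF.threshold_swap hbc] at hge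
  linarith

lemma const_mem_excessSet_iff (hF : IsPADCorrespondence F) (hab : a ≠ b) {s : ℝ} :
    Function.const I s ∈ excessSet F a b ↔ 0 < s :=
  (hF.const_mem_thresholdSet_iff hab).trans (lt_add_iff_pos_left _)

variable [Nonempty I]

lemma add_mem_excessSet (hF : IsPADCorrespondence F) (hab : a ≠ b) (hbc : b ≠ c) (hac : a ≠ c)
    (hα : α ∈ excessSet F a b) (hβ : β ∈ excessSet F b c) : α + β ∈ excessSet F a c := by
  have hconst : Function.const I (threshold F a c) =
      Function.const I (threshold F a b) + Function.const I (threshold F b c) := by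
    rw [← hF.threshold_add a b c]
    rfl
  have hmem := hF.add_mem_thresholdSet hab hbc hac hα hβ
  rwa [add_add_add_comm, ← hconst] at hmem

lemma excessSet_subset_right (hF : IsPADCorrespondence F) (hab : a ≠ b) (hac : a ≠ c) :
    excessSet F a b ⊆ excessSet F a c := by
  rcases eq_or_ne b c with rfl | hbc
  · exact subset_rfl
  intro α hα
  obtain ⟨ε, hε, hα'⟩ := exists_pos_sub_const_mem (isOpen_excessSet F a b) hα
  simpa using hF.add_mem_excessSet hab hbc hac hα' ((hF.const_mem_excessSet_iff hbc).2 hε)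

lemma excessSet_subset_left (hF : IsPADCorrespondence F) (hac : a ≠ c) (hbc : b ≠ c) :
    excessSet F a c ⊆ excessSet F b c := by
  rcases eq_or_ne a b with rfl | hab
  · exact subset_rfl
  intro α hα
  obtain ⟨ε, hε, hα'⟩ := exists_pos_sub_const_mem (isOpen_excessSet F a c) hα
  simpa using hF.add_mem_excessSet hab.symm hac hbc
    ((hF.const_mem_excessSet_iff hab.symm).2 hε) hα'

lemma excessSet_subset (hF : IsPADCorrespondence F) (hA : 3 ≤ Cardinal.mk A) (hab : a ≠ b)
    (hcd : c ≠ d) : excessSet F a b ⊆ excessSet F c d := by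
  obtain ⟨e, hea, hec⟩ := Cardinal.exists_ne_ne_of_three_le hA a c
  exact (hF.excessSet_subset_right hab hea.symm).trans
    ((hF.excessSet_subset_left hea.symm hec.symm).trans (hF.excessSet_subset_right hec.symm hcd))

lemma add_mem_excessSet_self (hF : IsPADCorrespondence F) (hA : 3 ≤ Cardinal.mk A) (hab : a ≠ b)
    (hα : α ∈ excessSet F a b) (hβ : β ∈ excessSet F a b) : α + β ∈ excessSet F a b := by
  obtain ⟨c, hca, hcb⟩ := Cardinal.exists_ne_ne_of_three_le hA a b
  exact hF.add_mem_excessSet hca.symm hcb hab (hF.excessSet_subset_right hab hca.symm hα)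
    (hF.excessSet_subset_left hab hcb hβ)

end FiniteAgents

variable [Fintype I]

lemma exists_weights_pos_on_excessSet [Nonempty I] (hF : IsPADCorrespondence F)
    (hA : 3 ≤ Cardinal.mk A) (hab : a ≠ b) :
    ∃ k : I → ℝ, 0 ≤ k ∧ ∀ α ∈ excessSet F a b, 0 < k ⬝ᵥ α := by
  let L : AddSubsemigroup (I → ℝ) :=
    { carrier := excessSet F a b
      add_mem' := hF.add_mem_excessSet_self hA hab }
  have hne : (excessSet F a b).Nonempty :=
    ⟨Function.const I 1, (hF.const_mem_excessSet_iff hab).2 one_pos⟩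
  have h0 : (0 : I → ℝ) ∉ L := fun h => ((hF.const_mem_excessSet_iff hab).1 h).false
  exact exists_weights_pos_of_isOpen (L := L) (isOpen_excessSet F a b)
    (isUpperSet_excessSet F a b) hne h0

theorem exists_affine_maximizer (hF : IsPADCorrespondence F) (hA : 3 ≤ Cardinal.mk A) :
    ∃ (k : I → ℝ) (C : A → ℝ), 0 ≤ k ∧ k ≠ 0 ∧
      ∀ v, ∀ a ∈ F v, ∀ b, ∑ i, k i * v i b + C b ≤ ∑ i, k i * v i a + C a := by
  have : Nontrivial A := Cardinal.one_lt_iff_nontrivial.1 (lt_of_lt_of_le (by norm_num) hA)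
  obtain ⟨o, p, hop⟩ := exists_pair_ne A
  have := hF.nonempty_agents hop
  obtain ⟨k, hk, hpos⟩ := hF.exists_weights_pos_on_excessSet hA hop
  have hk1 : 0 < k ⬝ᵥ 1 := hpos 1 ((hF.const_mem_excessSet_iff hop).2 one_pos)
  refine ⟨k, fun b => (k ⬝ᵥ 1) * threshold F o b, hk, ?_, fun v a hva b => ?_⟩
  · rintro rfl
    simp at hk1
  rcases eq_or_ne a b with rfl | hab
  · rfl
  have hle := mul_threshold_le_dotProduct_sub hk1
    (fun α hα => hpos α (hF.excessSet_subset hA hab hop hα)) hva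
  have hsub : k ⬝ᵥ (fun i => v i a - v i b) = ∑ i, k i * v i a - ∑ i, k i * v i b := by
    simp only [dotProduct, mul_sub, Finset.sum_sub_distrib]
  simp only [← hF.threshold_add o a b, mul_add]
  linarith

end IsPADCorrespondence

section Parallel

variable [Fintype A] [Nonempty A] {u : Util A}

lemma minVal_le (u : Util A) (a : A) : minVal u ≤ u a 0 :=
  Finset.inf'_le _ (Finset.mem_univ a)

lemma apply_wtp (h1 : S1 u) (h2 : S2 u) (a : A) : u a (wtp u a) = minVal u := by
  obtain ⟨z, hz⟩ := h2 a
  obtain ⟨y, hy⟩ := mem_range_of_exists_le_of_exists_ge (h1 a).1 ⟨z, hz.le⟩ ⟨0, minVal_le u a⟩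
  have hIci : {z : ℝ | u a z ≤ minVal u} = Set.Ici y := by
    ext w
    rw [Set.mem_ofPred_eq, ← hy, (h1 a).2.le_iff_ge, Set.mem_Ici]
  rw [wtp, hIci, csInf_Ici, hy]

lemma IsParallel.wtp_sub_le_wtp_sub (hu : IsParallel u) {a b : A} {s t : ℝ} (hs : 0 ≤ s)
    (ht : 0 ≤ t) (hmin : minVal u ≤ u a s) (hle : u b t ≤ u a s) :
    wtp u b - t ≤ wtp u a - s := by
  obtain ⟨h1, h2, hp⟩ := hu
  have hsa : s ≤ wtp u a := by
    rwa [← (h1 a).2.le_iff_ge, apply_wtp h1 h2]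
  rcases lt_or_ge (wtp u b) t with htb | htb
  · linarith
  rcases le_total (u b 0) (u a 0) with hba | hab
  · rw [← hp a b hba t ht htb, (h1 a).2.le_iff_ge] at hle
    linarith
  · rw [← hp b a hab s hs hsa, (h1 b).2.le_iff_ge] at hle
    linarith

lemma UnrestrictedWTP.exists_wtp_sub_eq {V : Set (Util A)} (hV : UnrestrictedWTP V) (v : A → ℝ) :
    ∃ w ∈ V, ∀ a b, wtp w a - wtp w b = v a - v b := by
  obtain ⟨o, ho⟩ := Finite.exists_min v
  obtain ⟨w, hw, hwv⟩ := hV (fun a => v a - v o) (fun a => sub_nonneg.2 (ho a)) ⟨o, sub_self _⟩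
  exact ⟨w, hw, fun a b => by rw [hwv, hwv, sub_sub_sub_cancel_right]⟩

end Parallel

section Mechanism

lemma forall_update_mem {β : Type*} [DecidableEq I] {U : I → Set β} {u : I → β}
    (hu : ∀ j, u j ∈ U j) {i : I} {w : β} (hw : w ∈ U i) (j : I) : Function.update u i w j ∈ U j :=
  (Function.forall_update_iff u fun j v => v ∈ U j).2 ⟨hw, fun j _ => hu j⟩ j

variable [Fintype A] [Nonempty A] [DecidableEq I] {U : I → Set (Util A)}
  {x : (I → Util A) → A} {t : (I → Util A) → I → ℝ}

lemma wtp_sub_payment_update_le (hpar : ∀ i, ∀ u ∈ U i, IsParallel u) (hDSIC : DSIC U x t)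
    (hIR : IR U x t) (hNS : NoSubsidy U t) {u : I → Util A} (hu : ∀ j, u j ∈ U j) {i : I}
    {w : Util A} (hw : w ∈ U i) :
    wtp (u i) (x (Function.update u i w)) - t (Function.update u i w) i ≤
      wtp (u i) (x u) - t u i := by
  have hu' := forall_update_mem hu hw
  have hrational := hIR u hu i (u i) (hu i)
  have htruthful := hDSIC _ hu' i (u i) (hu i)
  rw [Function.update_eq_self] at hrational
  rw [Function.update_idem, Function.update_eq_self] at htruthful
  exact (hpar i _ (hu i)).wtp_sub_le_wtp_sub (hNS u hu i) (hNS _ hu' i) hrational htruthful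

lemma wtp_sub_le_wtp_sub_update (hpar : ∀ i, ∀ u ∈ U i, IsParallel u) (hDSIC : DSIC U x t)
    (hIR : IR U x t) (hNS : NoSubsidy U t) {u : I → Util A} (hu : ∀ j, u j ∈ U j) {i : I}
    {w : Util A} (hw : w ∈ U i) :
    wtp (u i) (x (Function.update u i w)) - wtp (u i) (x u) ≤
      wtp w (x (Function.update u i w)) - wtp w (x u) := by
  have hold := wtp_sub_payment_update_le hpar hDSIC hIR hNS hu hw
  have hnew := wtp_sub_payment_update_le hpar hDSIC hIR hNS (forall_update_mem hu hw) (hu i)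
  rw [Function.update_self, Function.update_idem, Function.update_eq_self] at hnew
  linarith

lemma choice_eq_of_wtp_sub_lt [Finite I] (hpar : ∀ i, ∀ u ∈ U i, IsParallel u)
    (hDSIC : DSIC U x t) (hIR : IR U x t) (hNS : NoSubsidy U t) {u u' : I → Util A}
    (hu : ∀ j, u j ∈ U j) (hu' : ∀ j, u' j ∈ U j)
    (h : ∀ i, ∀ b ≠ x u, wtp (u i) (x u) - wtp (u i) b < wtp (u' i) (x u) - wtp (u' i) b) :
    x u' = x u := by
  cases nonempty_fintype I
  suffices hpiecewise : ∀ s : Finset I, x (s.piecewise u' u) = x u by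
    simpa using hpiecewise Finset.univ
  intro s
  induction s using Finset.induction_on with
  | empty => simp
  | insert i s hi ih =>
    by_contra hne
    have hmem (j : I) : s.piecewise u' u j ∈ U j :=
      s.piecewise_cases u' u (· ∈ U j) (hu' j) (hu j)
    have hmono := wtp_sub_le_wtp_sub_update hpar hDSIC hIR hNS hmem (hu' i)
    rw [← Finset.piecewise_insert, ih, Finset.piecewise_eq_of_notMem _ _ _ hi] at hmono
    linarith [h i _ hne]

/-- The choices `x` makes at profiles whose willingness-to-pay differences are those of `v`. Only
differences are compared because a willingness-to-pay vector always has a zero entry, whereas `v`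
is arbitrary. -/
def wtpChoices (U : I → Set (Util A)) (x : (I → Util A) → A) (v : I → A → ℝ) : Set A :=
  {a | ∃ u : I → Util A, (∀ j, u j ∈ U j) ∧ x u = a ∧
    ∀ i b c, wtp (u i) b - wtp (u i) c = v i b - v i c}

lemma isPADCorrespondence_wtpChoices [Finite I] (hpar : ∀ i, ∀ u ∈ U i, IsParallel u)
    (hunr : ∀ i, UnrestrictedWTP (U i)) (hDSIC : DSIC U x t) (hOnto : OntoMech U x)
    (hIR : IR U x t) (hNS : NoSubsidy U t) : IsPADCorrespondence (wtpChoices U x) where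
  nonempty v := by
    choose u hu huv using fun i => (hunr i).exists_wtp_sub_eq (v i)
    exact ⟨x u, u, hu, rfl, huv⟩
  onto a := by
    obtain ⟨u, hu, hx⟩ := hOnto a
    exact ⟨fun i => wtp (u i), u, hu, hx, fun _ _ _ => rfl⟩
  pad := by
    rintro v v' _ _ ⟨u, hu, rfl, huv⟩ h ⟨u', hu', rfl, huv'⟩
    refine choice_eq_of_wtp_sub_lt hpar hDSIC hIR hNS hu hu' fun i b hb => ?_
    rw [huv, huv']
    exact h i b hb

end Mechanism

/-- Roberts' theorem on parallel domains. With `|A| ≥ 3` and an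
unrestricted parallel utility domain, every DSIC, deterministic, onto, IR, no-subsidy
mechanism has a choice rule that is an affine maximizer of agents' willingness to pay. -/
theorem roberts_parallel
    [Fintype A] [Nonempty A] [Fintype I] [DecidableEq I]
    (hA : 3 ≤ Fintype.card A)
    (U : I → Set (Util A))
    (hpar : ∀ i, ∀ u ∈ U i, IsParallel u)
    (hunr : ∀ i, UnrestrictedWTP (U i))
    (x : (I → Util A) → A) (t : (I → Util A) → I → ℝ)
    (hDSIC : DSIC U x t) (hOnto : OntoMech U x)
    (hIR : IR U x t) (hNS : NoSubsidy U t) :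
    ∃ (k : I → ℝ) (C : A → ℝ), (∀ i, 0 ≤ k i) ∧ (∃ i, k i ≠ 0) ∧
      ∀ u : I → Util A, (∀ j, u j ∈ U j) → ∀ b : A,
        (∑ i, k i * wtp (u i) b) + C b ≤ (∑ i, k i * wtp (u i) (x u)) + C (x u) := by
  have hF := isPADCorrespondence_wtpChoices hpar hunr hDSIC hOnto hIR hNS
  obtain ⟨k, C, hk, hk0, hmax⟩ := hF.exists_affine_maximizer (by simpa using hA)
  exact ⟨k, C, hk, Function.ne_iff.1 hk0, fun u hu b =>
    hmax (fun i => wtp (u i)) (x u) ⟨u, hu, rfl, fun _ _ _ => rfl⟩ b⟩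

end NQLSC
end
end

section
/- (Two-slopes dictatorship.) Suppose |A| ≥ 3 and the type domain 𝒰 = ∏_{i=1}^n U_i is such that for each agent i, U_i contains an unrestricted linear domain with two slopes. Then every social choice mechanism on 𝒰 that is DSIC, deterministic and onto is a fixed price dictatorship: there exist an agent i* and fixed prices z ∈ ℝ^A such that for every u ∈ 𝒰, x(u) ∈ argmax_{a∈A} u_{i*,a}(z_a) and t_{i*}(u) = z_{x(u)}. -/
/-!
Common framework: agents indexed by `I`, alternatives `A` (finite, nonempty).
A type of an agent is a family `u : A → ℝ → ℝ`, where `u a z` is the utility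
when alternative `a` is selected and the agent pays `z`.
-/

noncomputable section

namespace NQLSC

variable {A I : Type*}

/-!
The values of linear types with fixed slopes give a surjective choice rule on `I → A → ℝ` with
positive association of differences. As in the proof of Roberts' theorem, "`a` beats `b`" then
depends, up to a constant, only on the vector of value differences, and the vectors at which it
holds form a set `C`, the same for all pairs, with the order properties of the open half-space
`∑ i, w i * d i > 0`. Summing finitely many elements of `C` shows that some multiple of some basis
vector lies in `C`; such an agent `i` is offered every alternative at a price, and her
utility threshold between `a` and `b` depends only on the differences `v j a - v j b` of the
others. Varying her slope at `a` alone reveals the price of `a` itself, which hence depends only on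
the `v j a - v j b`; taking two different alternatives as `b` makes it constant. Replacing arbitrary
types of the other agents one at a time by linear types that preserve the choice carries these
prices over to the whole domain.
-/

/-! ### Positive association of differences -/

/-- Positive association of differences: the chosen alternative stays chosen when every agent's
value for it strictly increases relative to her values for all other alternatives. -/
def PosAssoc (f : (I → A → ℝ) → A) : Prop :=
  ∀ v v' : I → A → ℝ, (∀ i b, b ≠ f v → v' i b - v i b < v' i (f v) - v i (f v)) → f v' = f v

lemma PosAssoc.ne {f : (I → A → ℝ) → A} (hf : PosAssoc f) {v v' : I → A → ℝ} {a b : A}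
    (hab : a ≠ b) (ha : f v = a) (h : ∀ i, v i a - v i b < v' i a - v' i b) : f v' ≠ b := by
  classical
  intro hb
  -- A profile to which positive association applies from `v` and from `v'`: the difference of
  -- `a` and `b` is the mean `m` of the two, and all other values are low.
  let m : I → ℝ := fun i => ((v i a - v i b) + (v' i a - v' i b)) / 2
  let w : I → A → ℝ := fun i c => if c = a then m i else if c = b then 0 else
    min (v i c + m i - v i a) (v' i c - v' i b) - 1
  have hwa : f w = f v := by
    refine hf v w fun i c hc => ?_
    rw [ha] at hc ⊢
    have := h i
    have := min_le_left (v i c + m i - v i a) (v' i c - v' i b)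
    by_cases hcb : c = b
    · subst hcb
      simp only [w, m, if_neg hc, if_true]
      linarith
    · simp only [w, if_neg hc, if_neg hcb, if_true]
      linarith
  have hwb : f w = f v' := by
    refine hf v' w fun i c hc => ?_
    rw [hb] at hc ⊢
    have := h i
    have := min_le_right (v i c + m i - v i a) (v' i c - v' i b)
    by_cases hca : c = a
    · subst hca
      simp only [w, m, if_neg hab.symm, if_true]
      linarith
    · simp only [w, if_neg hc, if_neg hca, if_neg hab.symm, if_true]
      linarith
  exact hab (by rw [← ha, ← hb, ← hwa, ← hwb])

lemma PosAssoc.exists_eqOn_mem {f : (I → A → ℝ) → A} (hf : PosAssoc f)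
    (honto : Function.Surjective f) {B : Set A} (hB : B.Nonempty) (y : I → A → ℝ) :
    ∃ v : I → A → ℝ, (∀ i, Set.EqOn (v i) (y i) B) ∧ f v ∈ B := by
  classical
  obtain ⟨a, ha⟩ := hB
  obtain ⟨w, hw⟩ := honto a
  refine ⟨fun i c => if c ∈ B then y i c else y i a - (w i a - w i c) - 1,
    fun i c hc => if_pos hc, ?_⟩
  by_contra hB
  refine hf.ne (ne_of_mem_of_not_mem ha hB) hw (fun i => ?_) rfl
  simp only [if_pos ha, if_neg hB]
  linarith

/-! ### Difference vectors at which one alternative beats another -/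

/-- The vectors `d` such that `a` is chosen at some profile where every agent `i` values `a` over
`b` by less than `d i`, uniformly in `i`. -/
def Beats (f : (I → A → ℝ) → A) (a b : A) : Set (I → ℝ) :=
  {d | ∃ v : I → A → ℝ, ∃ ε > 0, f v = a ∧ ∀ i, v i a - v i b + ε ≤ d i}

/-- The smallest uniform advantage at which `a` beats `b`. -/
def margin (f : (I → A → ℝ) → A) (a b : A) : ℝ :=
  sInf {r : ℝ | Function.const I r ∈ Beats f a b}

/-- The vectors of `Beats f a b`, measured relative to `margin f a b`. -/
def NormBeats (f : (I → A → ℝ) → A) (a b : A) : Set (I → ℝ) :=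
  {d | d + Function.const I (margin f a b) ∈ Beats f a b}

section Beats

variable {f : (I → A → ℝ) → A} {a b c : A}

lemma isUpperSet_beats : IsUpperSet (Beats f a b) := by
  rintro d e hde ⟨v, ε, hε, hv, hvd⟩
  exact ⟨v, ε, hε, hv, fun i => (hvd i).trans (hde i)⟩

lemma exists_sub_const_mem_beats {d : I → ℝ} (hd : d ∈ Beats f a b) :
    ∃ ε > 0, d - Function.const I ε ∈ Beats f a b := by
  obtain ⟨v, ε, hε, hv, hvd⟩ := hd
  refine ⟨ε / 2, half_pos hε, v, ε / 2, half_pos hε, hv, fun i => ?_⟩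
  simp only [Pi.sub_apply, Function.const_apply]
  linarith [hvd i]

lemma ne_of_sub_mem_beats (hf : PosAssoc f) (hab : a ≠ b) {v : I → A → ℝ}
    (hd : (fun i => v i a - v i b) ∈ Beats f a b) : f v ≠ b := by
  obtain ⟨w, ε, hε, hw, hwd⟩ := hd
  exact hf.ne hab hw fun i => by linarith [hwd i]

lemma notMem_beats_of_le_neg (hf : PosAssoc f) (hab : a ≠ b) {d e : I → ℝ}
    (hd : d ∈ Beats f a b) (hed : e ≤ -d) : e ∉ Beats f b a := by
  rintro ⟨v, ε, hε, hv, hve⟩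
  refine ne_of_sub_mem_beats hf hab (isUpperSet_beats (fun i => ?_) hd) hv
  linarith [hve i, show e i ≤ -d i from hed i]

lemma const_sub_mem_beats (hf : PosAssoc f) (honto : Function.Surjective f) (hab : a ≠ b)
    {d : I → ℝ} (hd : d ∉ Beats f a b) {ε : ℝ} (hε : 0 < ε) :
    Function.const I ε - d ∈ Beats f b a := by
  classical
  obtain ⟨v, hv, hfv⟩ := hf.exists_eqOn_mem honto (B := {a, b}) ⟨a, by simp⟩
    (fun i c => if c = a then d i - ε / 2 else 0)
  have hva : ∀ i, v i a = d i - ε / 2 := fun i => by simp [hv i (show a ∈ _ by simp)]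
  have hvb : ∀ i, v i b = 0 := fun i => by simp [hv i (show b ∈ _ by simp), hab.symm]
  rcases hfv with h | h
  · exact absurd ⟨v, ε / 2, half_pos hε, h, fun i => by rw [hva, hvb]; linarith⟩ hd
  · refine ⟨v, ε / 2, half_pos hε, h, fun i => ?_⟩
    simp only [hva, hvb, Pi.sub_apply, Function.const_apply]
    linarith

lemma add_mem_beats (hf : PosAssoc f) (honto : Function.Surjective f) (hab : a ≠ b)
    (hbc : b ≠ c) (hac : a ≠ c) {d e : I → ℝ} (hd : d ∈ Beats f a b) (he : e ∈ Beats f b c) :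
    d + e ∈ Beats f a c := by
  classical
  obtain ⟨ε, hε, hd'⟩ := exists_sub_const_mem_beats hd
  obtain ⟨v, hv, hfv⟩ := hf.exists_eqOn_mem honto (B := {a, b, c}) ⟨a, by simp⟩
    (fun i x => if x = a then d i - ε else if x = b then 0 else -e i)
  have hva : ∀ i, v i a = d i - ε := fun i => by simp [hv i (show a ∈ _ by simp)]
  have hvb : ∀ i, v i b = 0 := fun i => by simp [hv i (show b ∈ _ by simp), hab.symm]
  have hvc : ∀ i, v i c = -e i := fun i => by
    simp [hv i (show c ∈ _ by simp), hac.symm, hbc.symm]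
  rcases hfv with h | h | h
  · refine ⟨v, ε, hε, h, fun i => ?_⟩
    simp only [hva, hvc, Pi.add_apply]
    linarith
  · refine absurd h (ne_of_sub_mem_beats hf hab (isUpperSet_beats (fun i => ?_) hd'))
    simp only [hva, hvb, Pi.sub_apply, Function.const_apply, sub_zero, le_refl]
  · exact absurd h (ne_of_sub_mem_beats hf hbc (by simpa [hvc, hvb] using he))

lemma isUpperSet_normBeats : IsUpperSet (NormBeats f a b) :=
  fun _ _ hde hd => isUpperSet_beats (add_le_add_left hde _) hd

lemma exists_sub_const_mem_normBeats {d : I → ℝ} (hd : d ∈ NormBeats f a b) :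
    ∃ ε > 0, d - Function.const I ε ∈ NormBeats f a b := by
  obtain ⟨ε, hε, h⟩ := exists_sub_const_mem_beats hd
  exact ⟨ε, hε, by rwa [add_sub_right_comm] at h⟩

variable [Finite I]

lemma exists_const_mem_beats (honto : Function.Surjective f) (a b : A) :
    ∃ r : ℝ, Function.const I r ∈ Beats f a b := by
  obtain ⟨v, hv⟩ := honto a
  obtain ⟨M, hM⟩ := (Set.finite_range fun i => v i a - v i b).bddAbove
  exact ⟨M + 1, v, 1, one_pos, hv, fun i => by simpa using hM (Set.mem_range_self i)⟩

lemma bddBelow_const_mem_beats (hf : PosAssoc f) (honto : Function.Surjective f) (hab : a ≠ b) :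
    BddBelow {r : ℝ | Function.const I r ∈ Beats f a b} := by
  obtain ⟨r, hr⟩ := exists_const_mem_beats honto b a
  refine ⟨-r, fun s hs => ?_⟩
  by_contra! h
  exact notMem_beats_of_le_neg hf hab hs (fun _ => (lt_neg.1 h).le) hr

lemma const_mem_beats_of_margin_lt (honto : Function.Surjective f) {r : ℝ}
    (hr : margin f a b < r) : Function.const I r ∈ Beats f a b := by
  obtain ⟨s, hs, hsr⟩ := exists_lt_of_csInf_lt (exists_const_mem_beats honto a b) hr
  exact isUpperSet_beats (fun _ => hsr.le) hs

lemma margin_le_of_const_mem_beats (hf : PosAssoc f) (honto : Function.Surjective f)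
    (hab : a ≠ b) {r : ℝ} (hr : Function.const I r ∈ Beats f a b) : margin f a b ≤ r :=
  csInf_le (bddBelow_const_mem_beats hf honto hab) hr

lemma margin_swap (hf : PosAssoc f) (honto : Function.Surjective f) (hab : a ≠ b) :
    margin f b a = -margin f a b := by
  refine le_antisymm (le_of_forall_pos_le_add fun ε hε => ?_) (not_lt.1 fun h => ?_)
  · have hlt : Function.const I (margin f a b - ε / 2) ∉ Beats f a b := fun h => by
      linarith [margin_le_of_const_mem_beats hf honto hab h]
    refine margin_le_of_const_mem_beats hf honto hab.symm
      (isUpperSet_beats (fun _ => ?_) (const_sub_mem_beats hf honto hab hlt (half_pos hε)))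
    simp only [Pi.sub_apply, Function.const_apply]
    linarith
  · obtain ⟨r, hr, hr'⟩ := exists_between h
    exact notMem_beats_of_le_neg hf hab
      (const_mem_beats_of_margin_lt honto (lt_neg.1 hr')) (fun _ => by simp)
      (const_mem_beats_of_margin_lt honto hr)

lemma margin_le_add (hf : PosAssoc f) (honto : Function.Surjective f)
    (hab : a ≠ b) (hbc : b ≠ c) (hac : a ≠ c) :
    margin f a c ≤ margin f a b + margin f b c := by
  refine le_of_forall_pos_le_add fun ε hε => ?_
  have hadd := add_mem_beats hf honto hab hbc hac
    (const_mem_beats_of_margin_lt honto (lt_add_of_pos_right _ (half_pos hε)))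
    (const_mem_beats_of_margin_lt honto (lt_add_of_pos_right _ (half_pos hε)))
  refine margin_le_of_const_mem_beats hf honto hac (isUpperSet_beats (fun _ => ?_) hadd)
  simp only [Pi.add_apply, Function.const_apply]
  linarith

lemma margin_add (hf : PosAssoc f) (honto : Function.Surjective f)
    (hab : a ≠ b) (hbc : b ≠ c) (hac : a ≠ c) :
    margin f a b + margin f b c = margin f a c := by
  have h := margin_le_add hf honto hbc.symm hab.symm hac.symm
  rw [margin_swap hf honto hab, margin_swap hf honto hbc, margin_swap hf honto hac] at h
  linarith [margin_le_add hf honto hab hbc hac]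

lemma const_mem_normBeats (honto : Function.Surjective f) {ε : ℝ} (hε : 0 < ε) :
    Function.const I ε ∈ NormBeats f a b :=
  const_mem_beats_of_margin_lt honto (lt_add_of_pos_left _ hε)

lemma add_mem_normBeats (hf : PosAssoc f) (honto : Function.Surjective f)
    (hab : a ≠ b) (hbc : b ≠ c) (hac : a ≠ c) {d e : I → ℝ}
    (hd : d ∈ NormBeats f a b) (he : e ∈ NormBeats f b c) : d + e ∈ NormBeats f a c := by
  refine isUpperSet_beats (fun i => le_of_eq ?_) (add_mem_beats hf honto hab hbc hac hd he)
  simp only [Pi.add_apply, Function.const_apply, ← margin_add hf honto hab hbc hac]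
  ring

lemma normBeats_subset_right (hf : PosAssoc f) (honto : Function.Surjective f)
    (hab : a ≠ b) (hac : a ≠ c) : NormBeats f a b ⊆ NormBeats f a c := by
  rcases eq_or_ne b c with rfl | hbc
  · exact subset_rfl
  intro d hd
  obtain ⟨ε, hε, h⟩ := exists_sub_const_mem_normBeats hd
  simpa using add_mem_normBeats hf honto hab hbc hac h (const_mem_normBeats honto hε)

lemma normBeats_subset_left (hf : PosAssoc f) (honto : Function.Surjective f)
    (hab : a ≠ b) (hcb : c ≠ b) : NormBeats f a b ⊆ NormBeats f c b := by
  rcases eq_or_ne c a with rfl | hca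
  · exact subset_rfl
  intro d hd
  obtain ⟨ε, hε, h⟩ := exists_sub_const_mem_normBeats hd
  simpa using add_mem_normBeats hf honto hca hab hcb (const_mem_normBeats honto hε) h

lemma normBeats_subset (hA : 3 ≤ ENat.card A) (hf : PosAssoc f) (honto : Function.Surjective f)
    (hab : a ≠ b) {e : A} (hce : c ≠ e) : NormBeats f a b ⊆ NormBeats f c e := by
  rcases eq_or_ne a e with rfl | hae
  · obtain ⟨g, hga, hgc⟩ := ENat.exists_ne_ne_of_three_le hA a c
    exact (normBeats_subset_right hf honto hab hga.symm).trans
      ((normBeats_subset_left hf honto hga.symm hgc.symm).trans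
        (normBeats_subset_right hf honto hgc.symm hce))
  · exact (normBeats_subset_right hf honto hab hae).trans
      (normBeats_subset_left hf honto hae hce)

end Beats

/-! ### Half-space-like sets -/

/-- The order and additivity properties of the open half-space `{d | 0 < ∑ i, w i * d i}` of a
nonzero weight vector `w ≥ 0`; they replace the weights of Roberts' theorem. -/
structure IsHalfSpaceLike (C : Set (I → ℝ)) : Prop where
  isUpperSet : IsUpperSet C
  add_mem : ∀ d ∈ C, ∀ e ∈ C, d + e ∈ C
  exists_sub_const_mem : ∀ d ∈ C, ∃ ε > 0, d - Function.const I ε ∈ C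
  const_mem : ∀ ε > 0, Function.const I ε ∈ C
  zero_notMem : 0 ∉ C
  const_sub_mem : ∀ d ∉ C, ∀ ε > 0, Function.const I ε - d ∈ C

namespace IsHalfSpaceLike

variable {C : Set (I → ℝ)}

lemma sum_mem {ι : Type*} (hC : IsHalfSpaceLike C) {s : Finset ι} (hs : s.Nonempty)
    {d : ι → I → ℝ} (hd : ∀ k ∈ s, d k ∈ C) : ∑ k ∈ s, d k ∈ C :=
  Finset.sum_induction_nonempty d (· ∈ C) (fun d e hd he => hC.add_mem d hd e he) hs hd

lemma nsmul_mem (hC : IsHalfSpaceLike C) {n : ℕ} (hn : n ≠ 0) {d : I → ℝ} (hd : d ∈ C) :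
    n • d ∈ C := by
  simpa using hC.sum_mem (s := Finset.range n) (d := fun _ => d) (by simpa) fun _ _ => hd

variable [DecidableEq I]

lemma exists_single_one_mem [Finite I] (hC : IsHalfSpaceLike C) : ∃ i, Pi.single i 1 ∈ C := by
  cases nonempty_fintype I
  have : Nonempty I := not_isEmpty_iff.1 fun _ =>
    hC.zero_notMem (by convert hC.const_mem 1 one_pos)
  by_contra! h
  have hcard : (0 : ℝ) < Fintype.card I := mod_cast Fintype.card_pos
  have hsum := hC.sum_mem Finset.univ_nonempty fun i _ =>
    hC.const_sub_mem _ (h i) _ (inv_pos.2 hcard)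
  refine hC.zero_notMem ?_
  convert hsum
  ext j
  simp [Finset.sum_apply, hcard.ne']

lemma single_mem_of_single_mem (hC : IsHalfSpaceLike C) {i : I} {K δ : ℝ} (hδ : 0 < δ)
    (hK : Pi.single i K ∈ C) : Pi.single i δ ∈ C := by
  by_contra h
  obtain ⟨ε, hε, hKε⟩ := hC.exists_sub_const_mem _ hK
  obtain ⟨n, hn⟩ := exists_nat_ge (K / δ)
  have hn' : (0 : ℝ) < n + 1 := by positivity
  have hmul := hC.nsmul_mem n.succ_ne_zero (hC.const_sub_mem _ h _ (div_pos hε hn'))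
  refine hC.zero_notMem (hC.isUpperSet (fun j => ?_) (hC.add_mem _ hKε _ hmul))
  have hle : K ≤ (n + 1) * δ := ((div_le_iff₀ hδ).1 hn).trans (by linarith)
  have hcancel : (n + 1) * (ε / (n + 1)) = ε := mul_div_cancel₀ ε hn'.ne'
  rcases eq_or_ne j i with rfl | hj
  · simpa [mul_sub, hcancel] using hle
  · simp [hj, hcancel]

lemma exists_update_mem [Finite I] (hC : IsHalfSpaceLike C) {i : I} (hi : Pi.single i 1 ∈ C)
    (d : I → ℝ) : ∃ r, Function.update d i r ∈ C := by
  obtain ⟨ε, hε, hiε⟩ := hC.exists_sub_const_mem _ hi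
  obtain ⟨M, hM⟩ := (Set.finite_range fun j => -d j / ε).bddAbove
  obtain ⟨n, hn⟩ := exists_nat_ge M
  refine ⟨n + 1, hC.isUpperSet (fun j => ?_) (hC.nsmul_mem n.succ_ne_zero hiε)⟩
  rcases eq_or_ne j i with rfl | hj
  · have : 0 ≤ (n + 1) * ε := by positivity
    simp [mul_sub, this]
  · have : -d j ≤ n * ε := (div_le_iff₀ hε).1 ((hM (Set.mem_range_self j)).trans hn)
    simp only [Function.update_of_ne hj, Pi.smul_apply, Pi.sub_apply, Pi.single_eq_of_ne hj,
      Function.const_apply, nsmul_eq_mul, Nat.cast_succ]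
    linarith

end IsHalfSpaceLike

lemma PosAssoc.isHalfSpaceLike_normBeats [Finite I] (hA : 3 ≤ ENat.card A)
    {f : (I → A → ℝ) → A} (hf : PosAssoc f) (honto : Function.Surjective f) {a b : A}
    (hab : a ≠ b) : IsHalfSpaceLike (NormBeats f a b) where
  isUpperSet := isUpperSet_normBeats
  add_mem d hd e he := by
    obtain ⟨c, hca, hcb⟩ := ENat.exists_ne_ne_of_three_le hA a b
    exact add_mem_normBeats hf honto hca.symm hcb hab
      (normBeats_subset hA hf honto hab hca.symm hd) (normBeats_subset hA hf honto hab hcb he)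
  exists_sub_const_mem _ := exists_sub_const_mem_normBeats
  const_mem _ := const_mem_normBeats honto
  zero_notMem h := notMem_beats_of_le_neg hf hab h
    (fun _ => by simp [margin_swap hf honto hab])
    (normBeats_subset hA hf honto hab hab.symm h)
  const_sub_mem d hd ε hε := by
    refine normBeats_subset hA hf honto hab.symm hab ?_
    refine isUpperSet_beats (fun i => le_of_eq ?_) (const_sub_mem_beats hf honto hab hd hε)
    simp only [Pi.add_apply, Pi.sub_apply, Function.const_apply, margin_swap hf honto hab]
    ring

/-! ### Agents who can force every alternative -/

/-- Whatever the values of the others, agent `i` can bring about every alternative by some choice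
of her own values. In Roberts' theorem these are the agents of positive weight. -/
def CanForce [DecidableEq I] (f : (I → A → ℝ) → A) (i : I) : Prop :=
  ∀ (v : I → A → ℝ) (a : A), ∃ vi, f (Function.update v i vi) = a

section CanForce

variable [Finite I] [DecidableEq I] {f : (I → A → ℝ) → A} {a b : A} {i : I}

lemma single_one_mem_normBeats_iff (hA : 3 ≤ ENat.card A) (hf : PosAssoc f)
    (honto : Function.Surjective f) (hab : a ≠ b) :
    Pi.single i 1 ∈ NormBeats f a b ↔ CanForce f i := by
  classical
  refine ⟨fun hi v c => ?_, fun hi => ?_⟩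
  · have hC (e : A) (hce : c ≠ e) : ∃ r, Function.update
        (fun j => v j c - v j e - margin f c e) i r ∈ NormBeats f c e :=
      (hf.isHalfSpaceLike_normBeats hA honto hce).exists_update_mem
        (normBeats_subset hA hf honto hab hce hi) _
    choose! r hr using hC
    refine ⟨fun e => if e = c then 0 else -(r e + margin f c e), ?_⟩
    generalize he : f _ = e
    by_contra hne
    refine ne_of_sub_mem_beats hf (Ne.symm hne)
      (isUpperSet_beats (fun j => ?_) (hr e (Ne.symm hne))) he
    rcases eq_or_ne j i with rfl | hj
    · simp [hne]
    · simp [hj]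
  · obtain ⟨vi, hvi⟩ := hi (fun _ => Pi.single a (margin f a b - 1)) a
    refine (hf.isHalfSpaceLike_normBeats hA honto hab).single_mem_of_single_mem one_pos
      (K := vi a - vi b + 1 - margin f a b) ⟨_, 1, one_pos, hvi, fun j => ?_⟩
    rcases eq_or_ne j i with rfl | hj
    · simp
    · simp [hj, hab.symm]

theorem PosAssoc.exists_canForce (hA : 3 ≤ ENat.card A) (hf : PosAssoc f)
    (honto : Function.Surjective f) : ∃ i, CanForce f i := by
  have : Nontrivial A := (ENat.one_lt_card_iff_nontrivial A).1 (lt_of_lt_of_le (by norm_num) hA)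
  obtain ⟨a, b, hab⟩ := exists_pair_ne A
  obtain ⟨i, hi⟩ := (hf.isHalfSpaceLike_normBeats hA honto hab).exists_single_one_mem
  exact ⟨i, (single_one_mem_normBeats_iff hA hf honto hab).1 hi⟩

/-- The multiples `Pi.single i δ` with `δ > 0` all lie in the common `NormBeats` set, so a strict
increase of agent `i` alone suffices. -/
lemma CanForce.ne (hA : 3 ≤ ENat.card A) (hf : PosAssoc f) (honto : Function.Surjective f)
    (hi : CanForce f i) (hab : a ≠ b) {v v' : I → A → ℝ} (ha : f v = a)
    (hlt : v i a - v i b < v' i a - v' i b)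
    (hle : ∀ j, j ≠ i → v j a - v j b ≤ v' j a - v' j b) : f v' ≠ b := by
  have hC := hf.isHalfSpaceLike_normBeats hA honto hab
  obtain ⟨ε, hε, hiε⟩ := hC.exists_sub_const_mem _ <| hC.single_mem_of_single_mem
    (sub_pos.2 hlt) ((single_one_mem_normBeats_iff hA hf honto hab).2 hi)
  have hv : (fun j => v j a - v j b - margin f a b + ε) ∈ NormBeats f a b :=
    ⟨v, ε, hε, ha, fun j => le_of_eq (by simp only [Pi.add_apply, Function.const_apply]; ring)⟩
  refine ne_of_sub_mem_beats hf hab (isUpperSet_beats (fun j => ?_) (hC.add_mem _ hv _ hiε))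
  rcases eq_or_ne j i with rfl | hj
  · simp
  · simpa [hj] using hle j hj

end CanForce

/-! ### Linear types -/

/-- The linear type with values `v` and slopes `σ`. -/
def lin (σ v : A → ℝ) : Util A := fun a z => v a - σ a * z

/-- The profile of linear types with slopes `S` and values `v`. -/
def linProfile (S v : I → A → ℝ) : I → Util A := fun j => lin (S j) (v j)

/-- The slope vectors for which a domain contains all linear types, whatever their values. -/
def linearSlopes (U : Set (Util A)) : Set (A → ℝ) := {σ | ∀ v, lin σ v ∈ U}

/-- The slope at any single alternative can be varied without changing the slope at any other given
one. This is the property of unrestricted linear domains with two slopes that matters. -/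
def SeparatesSlopes (U : Set (Util A)) : Prop :=
  ∀ a b, a ≠ b → ∃ σ ∈ linearSlopes U, ∃ τ ∈ linearSlopes U, σ a ≠ τ a ∧ σ b = τ b

lemma separatesSlopes_of_two_slopes {U : Set (Util A)} {α β : ℝ} (hαβ : α ≠ β)
    (hU : ∀ (v : A → ℝ) (s : A → Bool), (fun a z => v a - (if s a then α else β) * z) ∈ U) :
    SeparatesSlopes U := by
  classical
  have hslopes (s : A → Bool) : (fun c => if s c then α else β) ∈ linearSlopes U := fun v => hU v s
  exact fun a b hab => ⟨_, hslopes fun _ => true, _, hslopes fun c => c ≠ a,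
    by simpa, by simp [hab.symm]⟩

lemma SeparatesSlopes.eq_of_sub_eq {U : Set (Util A)} (hU : SeparatesSlopes U) {a b : A}
    (hab : a ≠ b) {p q : A → ℝ}
    (h : ∀ σ ∈ linearSlopes U, σ a * p a - σ b * p b = σ a * q a - σ b * q b) : p a = q a := by
  obtain ⟨σ, hσ, τ, hτ, hne, heq⟩ := hU a b hab
  have hmul : (σ a - τ a) * (p a - q a) = 0 := by
    linear_combination h σ hσ - h τ hτ + (p b - q b) * heq
  exact sub_eq_zero.1 ((mul_eq_zero.1 hmul).resolve_left (sub_ne_zero.2 hne))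

open Classical in
/-- Values that make a linear type with slopes `σ` indifferent at the prices `p`, except for a
bonus `ε` at `a`. -/
def favor (σ p : A → ℝ) (a : A) (ε : ℝ) : A → ℝ :=
  fun c => σ c * p c + if c = a then ε else 0

lemma lin_favor_lt {σ p : A → ℝ} {a b : A} {ε : ℝ} (hε : 0 < ε) (hba : b ≠ a) :
    lin σ (favor σ p a ε) b (p b) < lin σ (favor σ p a ε) a (p a) := by
  simpa [lin, favor, hba] using hε

lemma linProfile_mem {U : I → Set (Util A)} {S : I → A → ℝ} (hS : ∀ j, S j ∈ linearSlopes (U j))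
    (v : I → A → ℝ) (j : I) : linProfile S v j ∈ U j :=
  hS j (v j)

section Mechanism

variable [DecidableEq I] {U : I → Set (Util A)} {x : (I → Util A) → A}
  {t : (I → Util A) → I → ℝ} {i : I} {u : I → Util A} {a b : A} {p z : A → ℝ}

lemma update_mem (hu : ∀ j, u j ∈ U j) {ui : Util A} (hui : ui ∈ U i) (j : I) :
    Function.update u i ui j ∈ U j :=
  (Function.forall_update_iff u fun j uj => uj ∈ U j).2 ⟨hui, fun j _ => hu j⟩ j

lemma update_linProfile (S v : I → A → ℝ) (i : I) (σ vi : A → ℝ) :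
    Function.update (linProfile S v) i (lin σ vi) =
      linProfile (Function.update S i σ) (Function.update v i vi) := by
  funext j
  rcases eq_or_ne j i with rfl | hj
  · simp [linProfile]
  · simp [linProfile, hj]

lemma linProfile_induction [Finite I] {S : I → A → ℝ} (hS : ∀ j, S j ∈ linearSlopes (U j))
    {P : (I → Util A) → Prop} (linear : ∀ v, P (linProfile S v))
    (update : ∀ u, (∀ j, u j ∈ U j) → ∀ j, (∀ v, P (Function.update u j (lin (S j) v))) → P u)
    (hu : ∀ j, u j ∈ U j) : P u := by
  cases nonempty_fintype I
  suffices H : ∀ (T : Finset I) (u : I → Util A), (∀ j, u j ∈ U j) →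
      (∀ j ∉ T, ∃ v, u j = lin (S j) v) → P u from
    H Finset.univ u hu fun j hj => absurd (Finset.mem_univ j) hj
  intro T
  induction T using Finset.induction_on with
  | empty =>
    intro u _ hT
    choose v hv using fun j => hT j (Finset.notMem_empty j)
    rw [show u = linProfile S v from funext hv]
    exact linear v
  | insert j T _ ih =>
    intro u hu hT
    refine update u hu j fun v => ih _ (update_mem hu (hS j v)) fun k hk => ?_
    rcases eq_or_ne k j with rfl | hkj
    · exact ⟨v, by simp⟩
    · simpa [hkj] using hT k (by simp [hk, hkj])

/-! ### Offered alternatives and prices -/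

/-- Agent `i` can obtain `a` at price `r` by some report, given the types of the others in `u`. -/
def Offered (U : I → Set (Util A)) (x : (I → Util A) → A) (t : (I → Util A) → I → ℝ) (i : I)
    (u : I → Util A) (a : A) (r : ℝ) : Prop :=
  ∃ ui ∈ U i, x (Function.update u i ui) = a ∧ t (Function.update u i ui) i = r

lemma offered_update {ui : Util A} (hui : ui ∈ U i) :
    Offered U x t i u (x (Function.update u i ui)) (t (Function.update u i ui) i) :=
  ⟨ui, hui, rfl, rfl⟩

lemma offered_self (hu : ∀ j, u j ∈ U j) : Offered U x t i u (x u) (t u i) := by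
  simpa using offered_update (u := u) (x := x) (t := t) (hu i)

lemma Offered.le_update (hD : DSIC U x t) (hu : ∀ j, u j ∈ U j) {r : ℝ}
    (h : Offered U x t i u b r) {ui : Util A} (hui : ui ∈ U i) :
    ui b r ≤ ui (x (Function.update u i ui)) (t (Function.update u i ui) i) := by
  obtain ⟨ui', hui', rfl, rfl⟩ := h
  simpa using hD _ (update_mem hu hui') i ui hui

lemma Offered.unique (hanti : ∀ i, ∀ u ∈ U i, ∀ a, StrictAnti (u a)) (hD : DSIC U x t)
    (hu : ∀ j, u j ∈ U j) {r r' : ℝ} (h : Offered U x t i u a r)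
    (h' : Offered U x t i u a r') : r = r' := by
  have hle : ∀ r r' : ℝ, Offered U x t i u a r → Offered U x t i u a r' → r ≤ r' := by
    rintro r r' ⟨ui, hui, rfl, rfl⟩ h'
    exact (hanti i ui hui _).le_iff_ge.1 (h'.le_update hD hu hui)
  exact le_antisymm (hle _ _ h h') (hle _ _ h' h)

lemma exists_offered_imp_eq (hanti : ∀ i, ∀ u ∈ U i, ∀ a, StrictAnti (u a)) (hD : DSIC U x t)
    (hu : ∀ j, u j ∈ U j) (i : I) : ∃ p : A → ℝ, ∀ a r, Offered U x t i u a r → r = p a := by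
  suffices H : ∀ a, ∃ q, ∀ r, Offered U x t i u a r → r = q from Classical.skolem.1 H
  intro a
  by_cases h : ∃ r, Offered U x t i u a r
  · obtain ⟨r, hr⟩ := h
    exact ⟨r, fun r' hr' => hr'.unique hanti hD hu hr⟩
  · exact ⟨0, fun r hr => absurd ⟨r, hr⟩ h⟩

lemma x_update_lin_favor (hD : DSIC U x t) (hu : ∀ j, u j ∈ U j)
    (hp : ∀ a r, Offered U x t i u a r → r = p a) (ha : ∃ r, Offered U x t i u a r)
    {σ : A → ℝ} (hσ : σ ∈ linearSlopes (U i)) {ε : ℝ} (hε : 0 < ε) :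
    x (Function.update u i (lin σ (favor σ p a ε))) = a := by
  by_contra hne
  obtain ⟨r, hr⟩ := ha
  have hle := hr.le_update hD hu (hσ (favor σ p a ε))
  rw [hp _ _ hr, hp _ _ (offered_update (hσ _))] at hle
  exact (lin_favor_lt hε hne).not_ge hle

lemma exists_x_update_lin_eq (hanti : ∀ i, ∀ u ∈ U i, ∀ a, StrictAnti (u a)) (hD : DSIC U x t)
    (hu : ∀ j, u j ∈ U j) {σ : A → ℝ} (hσ : σ ∈ linearSlopes (U i)) :
    ∃ v, x (Function.update u i (lin σ v)) = x u := by
  obtain ⟨p, hp⟩ := exists_offered_imp_eq hanti hD hu i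
  exact ⟨_, x_update_lin_favor hD hu hp ⟨_, offered_self hu⟩ hσ one_pos⟩

/-- Given the types of the others in `u`, every alternative is offered to agent `i`, at the
prices `p`. -/
def Faces (U : I → Set (Util A)) (x : (I → Util A) → A) (t : (I → Util A) → I → ℝ) (i : I)
    (u : I → Util A) (p : A → ℝ) : Prop :=
  ∀ a, Offered U x t i u a (p a)

lemma Faces.le_update (hanti : ∀ i, ∀ u ∈ U i, ∀ a, StrictAnti (u a)) (hD : DSIC U x t)
    (hu : ∀ j, u j ∈ U j) (hp : Faces U x t i u p) {ui : Util A} (hui : ui ∈ U i) (a : A) :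
    ui a (p a) ≤ ui (x (Function.update u i ui)) (p (x (Function.update u i ui))) := by
  have h := (hp a).le_update hD hu hui
  rwa [(offered_update hui).unique hanti hD hu (hp _)] at h

lemma Faces.x_update_lin_favor (hanti : ∀ i, ∀ u ∈ U i, ∀ a, StrictAnti (u a))
    (hD : DSIC U x t) (hu : ∀ j, u j ∈ U j) (hp : Faces U x t i u p) {σ : A → ℝ}
    (hσ : σ ∈ linearSlopes (U i)) (a : A) {ε : ℝ} (hε : 0 < ε) :
    x (Function.update u i (lin σ (favor σ p a ε))) = a :=
  NQLSC.x_update_lin_favor hD hu (fun c _ hr => hr.unique hanti hD hu (hp c)) ⟨_, hp a⟩ hσ hε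

/-! ### The choice rule on linear profiles -/

lemma x_update_lin_eq_of_sub_lt (hD : DSIC U x t) (hu : ∀ j, u j ∈ U j) {σ v v' : A → ℝ}
    (hσ : σ ∈ linearSlopes (U i)) (hv : u i = lin σ v) (ha : x u = a)
    (h : ∀ b, b ≠ a → v' b - v b < v' a - v a) :
    x (Function.update u i (lin σ v')) = a := by
  by_contra hne
  have hself := (offered_self (x := x) (t := t) hu).le_update hD hu (hσ v')
  have hupdate := (offered_update (x := x) (t := t) (u := u) (hσ v')).le_update hD hu (hu i)
  rw [Function.update_eq_self, hv] at hupdate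
  rw [ha] at hself hupdate
  have hlt := h _ hne
  simp only [lin] at hself hupdate
  linarith

lemma posAssoc_linProfile [Finite I] (hD : DSIC U x t) {S : I → A → ℝ}
    (hS : ∀ j, S j ∈ linearSlopes (U j)) : PosAssoc fun v => x (linProfile S v) := by
  cases nonempty_fintype I
  intro v v' h
  suffices H : ∀ T : Finset I, x (linProfile S (T.piecewise v' v)) = x (linProfile S v) by
    simpa using H Finset.univ
  intro T
  induction T using Finset.induction_on with
  | empty => simp
  | insert i T hi ih =>
    have hupdate : linProfile S ((insert i T).piecewise v' v) =
        Function.update (linProfile S (T.piecewise v' v)) i (lin (S i) (v' i)) := by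
      rw [update_linProfile, Function.update_eq_self, Finset.piecewise_insert]
    rw [hupdate]
    exact x_update_lin_eq_of_sub_lt hD (linProfile_mem hS _) (hS i)
      (v := v i) (by simp [linProfile, hi]) ih (h i)

lemma surjective_linProfile [Finite I] (hanti : ∀ i, ∀ u ∈ U i, ∀ a, StrictAnti (u a))
    (hD : DSIC U x t) (honto : OntoMech U x) {S : I → A → ℝ}
    (hS : ∀ j, S j ∈ linearSlopes (U j)) : Function.Surjective fun v => x (linProfile S v) := by
  intro a
  obtain ⟨u, hu, rfl⟩ := honto a
  refine linProfile_induction hS (P := fun u => ∃ v, x (linProfile S v) = x u)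
    (fun v => ⟨v, rfl⟩) (fun u hu j hj => ?_) hu
  obtain ⟨v, hv⟩ := exists_x_update_lin_eq hanti hD hu (hS j)
  exact hv ▸ hj v

lemma CanForce.exists_faces {S : I → A → ℝ} (hS : ∀ j, S j ∈ linearSlopes (U j))
    (hi : CanForce (fun v => x (linProfile S v)) i) (v : I → A → ℝ) :
    ∃ p, Faces U x t i (linProfile S v) p := by
  refine Classical.skolem.1 fun a => ?_
  obtain ⟨vi, hvi⟩ := hi v a
  refine ⟨_, lin (S i) vi, hS i vi, ?_, rfl⟩
  rwa [update_linProfile, Function.update_eq_self]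

/-! ### Constancy of prices -/

/-- The two sides are agent `i`'s thresholds between `a` and `b` in values, when her slopes are `σ`:
a strict inequality would contradict `CanForce.ne` for the rule with those slopes. -/
lemma sub_le_sub_of_faces_linProfile [Finite I] (hA : 3 ≤ ENat.card A)
    (hanti : ∀ i, ∀ u ∈ U i, ∀ a, StrictAnti (u a)) (hD : DSIC U x t) (honto : OntoMech U x)
    {S : I → A → ℝ} (hS : ∀ j, S j ∈ linearSlopes (U j)) {p : (I → A → ℝ) → A → ℝ}
    (hp : ∀ v, Faces U x t i (linProfile S v) (p v)) {σ : A → ℝ} (hσ : σ ∈ linearSlopes (U i))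
    (hab : a ≠ b) {v v' : I → A → ℝ} (hv : ∀ j, v j a - v j b = v' j a - v' j b) :
    σ a * p v' a - σ b * p v' b ≤ σ a * p v a - σ b * p v b := by
  have hS' : ∀ j, Function.update S i σ j ∈ linearSlopes (U j) :=
    (Function.forall_update_iff S fun j τ => τ ∈ linearSlopes (U j)).2 ⟨hσ, fun j _ => hS j⟩
  have hchoice (v : I → A → ℝ) (c : A) {ε : ℝ} (hε : 0 < ε) : x (linProfile
      (Function.update S i σ) (Function.update v i (favor σ (p v) c ε))) = c := by
    rw [← update_linProfile]
    exact (hp v).x_update_lin_favor hanti hD (linProfile_mem hS v) hσ c hε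
  have hforce : CanForce (fun v => x (linProfile (Function.update S i σ) v)) i :=
    fun v c => ⟨_, hchoice v c one_pos⟩
  by_contra! hlt
  obtain ⟨ε, hε, hε'⟩ : ∃ ε > 0, σ a * p v a - σ b * p v b + ε <
      σ a * p v' a - σ b * p v' b - ε :=
    ⟨_, div_pos (sub_pos.2 hlt) (zero_lt_three' ℝ), by linarith⟩
  refine hforce.ne hA (posAssoc_linProfile hD hS') (surjective_linProfile hanti hD honto hS') hab
    (hchoice v a hε) ?_ (fun j hj => ?_) (hchoice v' b hε)
  · simp only [Function.update_self, favor, if_true, if_neg hab, if_neg hab.symm]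
    linarith
  · simpa [hj] using (hv j).le

lemma price_eq_of_faces_linProfile [Finite I] (hA : 3 ≤ ENat.card A)
    (hanti : ∀ i, ∀ u ∈ U i, ∀ a, StrictAnti (u a)) (hslopes : SeparatesSlopes (U i))
    (hD : DSIC U x t) (honto : OntoMech U x) {S : I → A → ℝ}
    (hS : ∀ j, S j ∈ linearSlopes (U j)) {p : (I → A → ℝ) → A → ℝ}
    (hp : ∀ v, Faces U x t i (linProfile S v) (p v)) (v v' : I → A → ℝ) (a : A) :
    p v a = p v' a := by
  classical
  have heq {b : A} (hab : a ≠ b) {v v' : I → A → ℝ}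
      (hv : ∀ j, v j a - v j b = v' j a - v' j b) : p v a = p v' a :=
    hslopes.eq_of_sub_eq hab fun σ hσ => le_antisymm
      (sub_le_sub_of_faces_linProfile hA hanti hD honto hS hp hσ hab fun j => (hv j).symm)
      (sub_le_sub_of_faces_linProfile hA hanti hD honto hS hp hσ hab hv)
  obtain ⟨b, hba, -⟩ := ENat.exists_ne_ne_of_three_le hA a a
  obtain ⟨c, hca, hcb⟩ := ENat.exists_ne_ne_of_three_le hA a b
  -- A profile with the `a`-`b` differences of `v` and the `a`-`c` differences of `v'`.
  let w : I → A → ℝ := fun j => Function.update (v j) c (v j a - (v' j a - v' j c))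
  exact (heq hba.symm fun j => by simp [w, hca.symm, hcb.symm]).trans
    (heq hca.symm fun j => by simp [w, hca.symm] : p w a = p v' a)

theorem exists_forall_faces_linProfile [Finite I] (hA : 3 ≤ ENat.card A)
    (hanti : ∀ i, ∀ u ∈ U i, ∀ a, StrictAnti (u a)) (hslopes : ∀ i, SeparatesSlopes (U i))
    (hD : DSIC U x t) (honto : OntoMech U x) {S : I → A → ℝ}
    (hS : ∀ j, S j ∈ linearSlopes (U j)) :
    ∃ (i : I) (z : A → ℝ), ∀ v, Faces U x t i (linProfile S v) z := by
  obtain ⟨i, hi⟩ := (posAssoc_linProfile hD hS).exists_canForce hA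
    (surjective_linProfile hanti hD honto hS)
  choose p hp using hi.exists_faces (t := t) hS
  exact ⟨i, p 0, fun v a =>
    price_eq_of_faces_linProfile hA hanti (hslopes i) hD honto hS hp v 0 a ▸ hp v a⟩

lemma faces_of_lin_le [Nontrivial A] (hanti : ∀ i, ∀ u ∈ U i, ∀ a, StrictAnti (u a))
    (hslopes : SeparatesSlopes (U i)) (hD : DSIC U x t) (hu : ∀ j, u j ∈ U j)
    (hz : ∀ σ ∈ linearSlopes (U i), ∀ v a c, x (Function.update u i (lin σ v)) = c →
      lin σ v a (z a) ≤ lin σ v c (z c)) : Faces U x t i u z := by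
  obtain ⟨p, hp⟩ : ∃ p, Faces U x t i u p := Classical.skolem.1 fun a => by
    obtain ⟨b, hb⟩ := exists_ne a
    obtain ⟨σ, hσ, -⟩ := hslopes b a hb
    refine ⟨_, _, hσ (favor σ z a 1), ?_, rfl⟩
    by_contra hne
    exact (lin_favor_lt one_pos hne).not_ge (hz σ hσ _ a _ rfl)
  have hle {σ : A → ℝ} (hσ : σ ∈ linearSlopes (U i)) {a b : A} (hab : a ≠ b) :
      σ b * p b - σ b * z b ≤ σ a * p a - σ a * z a := by
    refine le_of_forall_pos_le_add fun ε hε => ?_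
    have h := hz σ hσ _ b a (hp.x_update_lin_favor hanti hD hu hσ a hε)
    simp only [lin, favor, if_true, if_neg hab.symm] at h
    linarith
  have hpz : p = z := funext fun a => by
    obtain ⟨b, hb⟩ := exists_ne a
    exact hslopes.eq_of_sub_eq hb.symm fun σ hσ => by linarith [hle hσ hb, hle hσ hb.symm]
  exact hpz ▸ hp

lemma faces_of_forall_faces_update [Nontrivial A]
    (hanti : ∀ i, ∀ u ∈ U i, ∀ a, StrictAnti (u a)) (hslopes : SeparatesSlopes (U i))
    (hD : DSIC U x t) (hu : ∀ j, u j ∈ U j) {j : I} {τ : A → ℝ} (hτ : τ ∈ linearSlopes (U j))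
    (hz : ∀ v, Faces U x t i (Function.update u j (lin τ v)) z) : Faces U x t i u z := by
  rcases eq_or_ne j i with rfl | hji
  · simpa [Faces, Offered] using hz 0
  refine faces_of_lin_le hanti hslopes hD hu fun σ hσ v a c hc => ?_
  obtain ⟨w, hw⟩ := exists_x_update_lin_eq hanti hD (update_mem hu (hσ v)) hτ
  rw [Function.update_comm hji.symm, hc] at hw
  simpa only [hw] using (hz w).le_update hanti hD (update_mem hu (hτ w)) (hσ v) a

end Mechanism

theorem two_slopes_dictatorship_general [Finite I] [DecidableEq I] (hA : 3 ≤ ENat.card A)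
    (U : I → Set (Util A)) (hanti : ∀ i, ∀ u ∈ U i, ∀ a, StrictAnti (u a))
    (hslopes : ∀ i, SeparatesSlopes (U i)) (x : (I → Util A) → A) (t : (I → Util A) → I → ℝ)
    (hDSIC : DSIC U x t) (hOnto : OntoMech U x) :
    ∃ (istar : I) (z : A → ℝ), ∀ u : I → Util A, (∀ j, u j ∈ U j) →
      (∀ a : A, u istar a (z a) ≤ u istar (x u) (z (x u))) ∧ t u istar = z (x u) := by
  have : Nontrivial A := (ENat.one_lt_card_iff_nontrivial A).1 (lt_of_lt_of_le (by norm_num) hA)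
  obtain ⟨a, b, hab⟩ := exists_pair_ne A
  choose S hS _ using fun i => hslopes i a b hab
  obtain ⟨i, z, hz⟩ := exists_forall_faces_linProfile hA hanti hslopes hDSIC hOnto hS
  refine ⟨i, z, fun u hu => ?_⟩
  have hfaces : Faces U x t i u z := linProfile_induction (P := fun u => Faces U x t i u z) hS hz
    (fun u hu j => faces_of_forall_faces_update hanti (hslopes i) hDSIC hu (hS j)) hu
  refine ⟨fun a => ?_, (offered_self hu).unique hanti hDSIC hu (hfaces (x u))⟩
  simpa using hfaces.le_update hanti hDSIC hu (hu i) a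

/-- Two-slopes dictatorship. With `|A| ≥ 3`, if each `U i` contains an
unrestricted linear domain with two slopes, then every DSIC, deterministic, onto
mechanism is a fixed price dictatorship. -/
theorem two_slopes_dictatorship
    [Fintype A] [Nonempty A] [Fintype I] [DecidableEq I]
    (hA : 3 ≤ Fintype.card A)
    (U : I → Set (Util A))
    (hS : ∀ i, ∀ u ∈ U i, S1 u ∧ S2 u)
    -- each `U i` contains an unrestricted linear domain with two slopes
    (hTwo : ∀ i, ∃ α β : ℝ, 0 < α ∧ 0 < β ∧ α ≠ β ∧
      ∀ (v : A → ℝ) (s : A → Bool),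
        (fun a z => v a - (if s a then α else β) * z) ∈ U i)
    (x : (I → Util A) → A) (t : (I → Util A) → I → ℝ)
    (hDSIC : DSIC U x t) (hOnto : OntoMech U x) :
    ∃ (istar : I) (z : A → ℝ), ∀ u : I → Util A, (∀ j, u j ∈ U j) →
      (∀ a : A, u istar a (z a) ≤ u istar (x u) (z (x u))) ∧ t u istar = z (x u) := by
  exact two_slopes_dictatorship_general (by simpa using hA) U (fun i u hu a => ((hS i u hu).1 a).2)
    (fun i => let ⟨_, _, _, _, hαβ, hU⟩ := hTwo i; separatesSlopes_of_two_slopes hαβ hU)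
    x t hDSIC hOnto
end NQLSC
end
end
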